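/- arXiv:2505.19719 — 3 statements merged into one kernel-verified Lean document; each statement's English description precedes it below -/
import Mathlib

section
/- Let E be a real inner product space, let x, y ∈ E with d = dist(x, y) > 0, and let r₁, r₂ > 0 satisfy |r₁ - r₂| ≤ d ≤ r₁ + r₂. Let p = x + ((r₁ - r₂ + d)/(2d)) · (y - x). Then the closed ball of radius (r₁ + r₂ - d)/2 centered at p is contained in the intersection of the closed ball of radius r₁ centered at x and the closed ball of radius r₂ centered at y. -/
/-!
The point `p` lies on the segment from `x` to `y`, at distance `(r₁ - r₂ + d) / 2` from `x` and
`(r₂ - r₁ + d) / 2` from `y`. Adding the radius `(r₁ + r₂ - d) / 2` gives exactly `r₁` and `r₂`, so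
the triangle inequality suffices.
-/

section NormedAddTorsor

open AffineMap Metric

variable {V P : Type*} [SeminormedAddCommGroup V] [NormedSpace ℝ V] [PseudoMetricSpace P]
  [NormedAddTorsor V P] {x y : P}

theorem closedBall_lineMap_subset_inter_closedBall {t : ℝ} (ht : t ∈ Set.Icc 0 1) (r : ℝ) :
    closedBall (lineMap x y t) r ⊆
      closedBall x (r + t * dist x y) ∩ closedBall y (r + (1 - t) * dist x y) := by
  apply Set.subset_inter <;> apply closedBall_subset_closedBall'
  · rw [dist_lineMap_left, Real.norm_of_nonneg ht.1]
  · rw [dist_lineMap_right, Real.norm_of_nonneg (sub_nonneg.mpr ht.2)]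

theorem ball_subset_inter_closedBalls_general {r₁ r₂ : ℝ} (hd : 0 < dist x y)
    (hr : |r₁ - r₂| ≤ dist x y) :
    closedBall (lineMap x y ((r₁ - r₂ + dist x y) / (2 * dist x y))) ((r₁ + r₂ - dist x y) / 2) ⊆
      closedBall x r₁ ∩ closedBall y r₂ := by
  obtain ⟨hr_lower, hr_upper⟩ := abs_le.mp hr
  have ht : (r₁ - r₂ + dist x y) / (2 * dist x y) ∈ Set.Icc 0 1 :=
    ⟨div_nonneg (by linarith) (by positivity), (div_le_one (by positivity)).mpr (by linarith)⟩
  convert closedBall_lineMap_subset_inter_closedBall ht ((r₁ + r₂ - dist x y) / 2) using 3 <;>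
    field_simp <;> ring

end NormedAddTorsor

theorem ball_subset_inter_closedBalls {E : Type*} [NormedAddCommGroup E]
    [InnerProductSpace ℝ E] (x y : E) (r₁ r₂ : ℝ)
    (hd : 0 < dist x y) (hr₁ : 0 < r₁) (hr₂ : 0 < r₂)
    (hlo : |r₁ - r₂| ≤ dist x y) (hhi : dist x y ≤ r₁ + r₂) :
    Metric.closedBall (x + ((r₁ - r₂ + dist x y) / (2 * dist x y)) • (y - x))
        ((r₁ + r₂ - dist x y) / 2)
      ⊆ Metric.closedBall x r₁ ∩ Metric.closedBall y r₂ := by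
  rw [add_comm x, ← AffineMap.lineMap_apply_module']
  exact ball_subset_inter_closedBalls_general hd hlo
end

section
/- Let E be a real inner product space, let x, y ∈ E with d = dist(x, y), and let r₁, r₂ ≥ 0 with d ≤ 2·max(r₁, r₂). Then every point z with dist(z, x) ≤ r₁ and dist(z, y) ≤ r₂ satisfies dist(z, m) ≤ √( (max(r₁, r₂))² - (d/2)² ), where m = (x + y)/2 is the midpoint of x and y; hence the intersection of the two closed balls is contained in the closed ball of radius √((max(r₁,r₂))² - (d/2)²) centered at the midpoint of x and y. -/
section

variable {V P : Type*} [NormedAddCommGroup V] [InnerProductSpace ℝ V] [MetricSpace P]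
  [NormedAddTorsor V P] {x y z : P} {r₁ r₂ : ℝ}

theorem dist_midpoint_sq_le_of_dist_le (hz₁ : dist z x ≤ r₁) (hz₂ : dist z y ≤ r₂) :
    dist z (midpoint ℝ x y) ^ 2 ≤ (r₁ ^ 2 + r₂ ^ 2) / 2 - (dist x y / 2) ^ 2 := by
  have apollonius : dist z x ^ 2 + dist z y ^ 2 =
      2 * (dist z (midpoint ℝ x y) ^ 2 + (dist x y / 2) ^ 2) :=
    EuclideanGeometry.dist_sq_add_dist_sq_eq_two_mul_dist_midpoint_sq_add_half_dist_sq z x y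
  calc
    dist z (midpoint ℝ x y) ^ 2
        = (dist z x ^ 2 + dist z y ^ 2) / 2 - (dist x y / 2) ^ 2 := by linarith
    _ ≤ (r₁ ^ 2 + r₂ ^ 2) / 2 - (dist x y / 2) ^ 2 := by gcongr

theorem inter_closedBalls_subset_ball_midpoint_general (hz₁ : dist z x ≤ r₁)
    (hz₂ : dist z y ≤ r₂) :
    dist z (midpoint ℝ x y) ≤ Real.sqrt ((r₁ ^ 2 + r₂ ^ 2) / 2 - (dist x y / 2) ^ 2) :=
  Real.le_sqrt_of_sq_le (dist_midpoint_sq_le_of_dist_le hz₁ hz₂)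

end

theorem inter_closedBalls_subset_ball_midpoint {E : Type*} [NormedAddCommGroup E]
    [InnerProductSpace ℝ E] (x y : E) (r₁ r₂ : ℝ)
    (hr₁ : 0 ≤ r₁) (hr₂ : 0 ≤ r₂) (hd : dist x y ≤ 2 * max r₁ r₂)
    (z : E) (hz₁ : dist z x ≤ r₁) (hz₂ : dist z y ≤ r₂) :
    dist z (midpoint ℝ x y) ≤ Real.sqrt ((max r₁ r₂) ^ 2 - (dist x y / 2) ^ 2) := by
  simpa only [add_self_div_two] using inter_closedBalls_subset_ball_midpoint_general
    (hz₁.trans (le_max_left r₁ r₂)) (hz₂.trans (le_max_right r₁ r₂))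
end

section
/- Work in the D-dimensional Euclidean space ℝ^D (D ≥ 1) with Lebesgue measure, and let V(1) denote the volume of the unit ball. Let x, y ∈ ℝ^D with d = dist(x, y) > 0 and let r₁, r₂ > 0 satisfy |r₁ - r₂| ≤ d ≤ r₁ + r₂. Then the volume A(r₁, r₂, d) of the intersection of the closed ball of radius r₁ centered at x and the closed ball of radius r₂ centered at y satisfies V(1) · ((r₁ + r₂ - d)/2)^D ≤ A(r₁, r₂, d) ≤ V(1) · ( (max(r₁, r₂))² - (d/2)² )^{D/2}. -/
open MeasureTheory

/-!
Two overlapping balls, neither strictly inside the other, share the ball of radius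
`(r₁ + r₂ - d) / 2` centred at the point of the segment `[x, y]` at distance `(d + r₁ - r₂) / 2`
from `x`; this uses only the norm. Conversely, by Apollonius' theorem
`dist z x ^ 2 + dist z y ^ 2 = 2 * (dist z m ^ 2 + (d / 2) ^ 2)` with `m` the midpoint of `x` and
`y`, every common point `z` satisfies `dist z m ^ 2 ≤ (r₁ ^ 2 + r₂ ^ 2) / 2 - (d / 2) ^ 2`. Both
volume bounds follow from the scaling of Haar measure.
-/

open Metric Module

theorem sq_half_le_sq_add_sq_div_two {a b d : ℝ} (hd : 0 ≤ d) (h : d ≤ a + b) :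
    (d / 2) ^ 2 ≤ (a ^ 2 + b ^ 2) / 2 :=
  calc
    (d / 2) ^ 2 ≤ ((a + b) / 2) ^ 2 := by gcongr
    _ ≤ (a ^ 2 + b ^ 2) / 2 := by linarith [add_sq_le (a := a) (b := b)]

theorem sq_add_sq_div_two_le_max_sq {a b : ℝ} (ha : 0 ≤ a) (hb : 0 ≤ b) :
    (a ^ 2 + b ^ 2) / 2 ≤ max a b ^ 2 := by
  have ha' : a ^ 2 ≤ max a b ^ 2 := by gcongr; exact le_max_left a b
  have hb' : b ^ 2 ≤ max a b ^ 2 := by gcongr; exact le_max_right a b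
  linarith

theorem exists_closedBall_subset_inter_closedBall {E : Type*} [SeminormedAddCommGroup E]
    [NormedSpace ℝ E] {x y : E} {r₁ r₂ : ℝ} (hlo : |r₁ - r₂| ≤ dist x y) :
    ∃ c, closedBall c ((r₁ + r₂ - dist x y) / 2) ⊆ closedBall x r₁ ∩ closedBall y r₂ := by
  obtain ⟨hle, hge⟩ := abs_le.1 hlo
  obtain ⟨c, hxc, hcy⟩ : ∃ c, dist x c ≤ (dist x y + r₁ - r₂) / 2 ∧
      dist c y ≤ (dist x y + r₂ - r₁) / 2 :=
    exists_dist_le_le (by linarith) (by linarith) (by linarith)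
  rw [dist_comm] at hxc
  exact ⟨c, Set.subset_inter (closedBall_subset_closedBall' (by linarith))
    (closedBall_subset_closedBall' (by linarith))⟩

theorem inter_closedBall_subset_closedBall_midpoint {V P : Type*} [NormedAddCommGroup V]
    [InnerProductSpace ℝ V] [MetricSpace P] [NormedAddTorsor V P] (x y : P) (r₁ r₂ : ℝ) :
    closedBall x r₁ ∩ closedBall y r₂ ⊆
      closedBall (midpoint ℝ x y) √((r₁ ^ 2 + r₂ ^ 2) / 2 - (dist x y / 2) ^ 2) := by
  rintro z ⟨hzx, hzy⟩
  have hzx_sq : dist z x ^ 2 ≤ r₁ ^ 2 := by gcongr; exact hzx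
  have hzy_sq : dist z y ^ 2 ≤ r₂ ^ 2 := by gcongr; exact hzy
  have apollonius :=
    EuclideanGeometry.dist_sq_add_dist_sq_eq_two_mul_dist_midpoint_sq_add_half_dist_sq z x y
  exact Real.le_sqrt_of_sq_le (by linarith)

section HaarMeasure

variable {E : Type*} [NormedAddCommGroup E] [MeasurableSpace E] [BorelSpace E]
  (μ : Measure E) [μ.IsAddHaarMeasure]

theorem mul_pow_le_measureReal_inter_closedBall [NormedSpace ℝ E] [FiniteDimensional ℝ E]
    {x y : E} {r₁ r₂ : ℝ} (hlo : |r₁ - r₂| ≤ dist x y) (hhi : dist x y ≤ r₁ + r₂) :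
    μ.real (closedBall 0 1) * ((r₁ + r₂ - dist x y) / 2) ^ finrank ℝ E ≤
      μ.real (closedBall x r₁ ∩ closedBall y r₂) := by
  obtain ⟨c, hc⟩ := exists_closedBall_subset_inter_closedBall hlo
  calc
    _ = μ.real (closedBall c ((r₁ + r₂ - dist x y) / 2)) := by
      rw [Measure.addHaar_real_closedBall' μ c (by linarith), mul_comm]
    _ ≤ _ := measureReal_mono hc
      (measure_ne_top_of_subset Set.inter_subset_left measure_closedBall_lt_top.ne)

variable [InnerProductSpace ℝ E] [FiniteDimensional ℝ E]

theorem measureReal_inter_closedBall_le_mul_sqrt_pow (x y : E) (r₁ r₂ : ℝ) :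
    μ.real (closedBall x r₁ ∩ closedBall y r₂) ≤
      μ.real (closedBall 0 1) *
        √((r₁ ^ 2 + r₂ ^ 2) / 2 - (dist x y / 2) ^ 2) ^ finrank ℝ E :=
  calc
    _ ≤ μ.real (closedBall (midpoint ℝ x y) √((r₁ ^ 2 + r₂ ^ 2) / 2 - (dist x y / 2) ^ 2)) :=
      measureReal_mono (inter_closedBall_subset_closedBall_midpoint x y r₁ r₂)
        measure_closedBall_lt_top.ne
    _ = _ := by rw [Measure.addHaar_real_closedBall' μ _ (Real.sqrt_nonneg _), mul_comm]

theorem volume_inter_balls_bounds_general {x y : E} {r₁ r₂ : ℝ}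
    (hlo : |r₁ - r₂| ≤ dist x y) (hhi : dist x y ≤ r₁ + r₂) :
    μ.real (closedBall 0 1) * ((r₁ + r₂ - dist x y) / 2) ^ finrank ℝ E ≤
      μ.real (closedBall x r₁ ∩ closedBall y r₂) ∧
    μ.real (closedBall x r₁ ∩ closedBall y r₂) ≤
      μ.real (closedBall 0 1) *
        ((r₁ ^ 2 + r₂ ^ 2) / 2 - (dist x y / 2) ^ 2) ^ ((finrank ℝ E : ℝ) / 2) := by
  refine ⟨mul_pow_le_measureReal_inter_closedBall μ hlo hhi, ?_⟩
  rw [Real.rpow_div_two_eq_sqrt _ (sub_nonneg.2 (sq_half_le_sq_add_sq_div_two dist_nonneg hhi)),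
    Real.rpow_natCast]
  exact measureReal_inter_closedBall_le_mul_sqrt_pow μ x y r₁ r₂

end HaarMeasure

theorem volume_inter_balls_bounds (D : ℕ) (hD : 1 ≤ D)
    (x y : EuclideanSpace ℝ (Fin D)) (r₁ r₂ : ℝ)
    (hd : 0 < dist x y) (hr₁ : 0 < r₁) (hr₂ : 0 < r₂)
    (hlo : |r₁ - r₂| ≤ dist x y) (hhi : dist x y ≤ r₁ + r₂) :
    (volume (Metric.closedBall (0 : EuclideanSpace ℝ (Fin D)) 1)).toReal
        * ((r₁ + r₂ - dist x y) / 2) ^ D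
      ≤ (volume (Metric.closedBall x r₁ ∩ Metric.closedBall y r₂)).toReal ∧
    (volume (Metric.closedBall x r₁ ∩ Metric.closedBall y r₂)).toReal
      ≤ (volume (Metric.closedBall (0 : EuclideanSpace ℝ (Fin D)) 1)).toReal
          * ((max r₁ r₂) ^ 2 - (dist x y / 2) ^ 2) ^ ((D : ℝ) / 2) := by
  have hnonneg := sub_nonneg.2 (sq_half_le_sq_add_sq_div_two dist_nonneg hhi)
  have hbounds := volume_inter_balls_bounds_general volume hlo hhi
  simp only [measureReal_def, finrank_euclideanSpace_fin] at hbounds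
  refine ⟨hbounds.1, hbounds.2.trans ?_⟩
  gcongr
  exact sq_add_sq_div_two_le_max_sq hr₁.le hr₂.le
end
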